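/- Let a ≥ 2 and l ≥ 1 be integers, and write l = a·m + ε with integers m ≥ 0 and ε ∈ {0,1}. Then the closed stratum Σ_{(a,1^l)}^{S^1} of the n-fold symmetric smash product (S^1)^{(n)}, where n = a + l and the partition (a,1^l) consists of one part equal to a and l parts equal to 1, is homotopy equivalent to the sphere S^{2m+ε+1}. -/

import Mathlib

/-- Two `n`-tuples are related if one is a permutation of the other. -/
def permRel (n : ℕ) (X : Type) : (Fin n → X) → (Fin n → X) → Prop :=
  fun x y => ∃ σ : Equiv.Perm (Fin n), x ∘ σ = y

/-- `Sym^n X`: the quotient of `X^n` by the permutation action of `S_n`,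
with the quotient topology. -/
def SymQ (n : ℕ) (X : Type) [TopologicalSpace X] : Type :=
  Quot (permRel n X)

instance (n : ℕ) (X : Type) [TopologicalSpace X] : TopologicalSpace (SymQ n X) :=
  inferInstanceAs (TopologicalSpace (Quot _))

/-- The relation collapsing the set of multisets containing the basepoint. -/
def infRel (n : ℕ) (X : Type) [TopologicalSpace X] (star : X) :
    SymQ n X → SymQ n X → Prop :=
  fun p q => p = q ∨
    ((∃ y : Fin n → X, p = Quot.mk _ y ∧ ∃ i, y i = star) ∧
     (∃ y : Fin n → X, q = Quot.mk _ y ∧ ∃ i, y i = star))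

/-- `X^{(n)}`, the `n`-fold symmetric smash product: the quotient of `Sym^n X`
collapsing all multisets containing the basepoint to a single point. -/
def SymSmash (n : ℕ) (X : Type) [TopologicalSpace X] (star : X) : Type :=
  Quot (infRel n X star)

instance (n : ℕ) (X : Type) [TopologicalSpace X] (star : X) :
    TopologicalSpace (SymSmash n X star) :=
  inferInstanceAs (TopologicalSpace (Quot _))

/-- The canonical projection `X^n → X^{(n)}`. -/
def symProj (n : ℕ) (X : Type) [TopologicalSpace X] (star : X) (y : Fin n → X) :
    SymSmash n X star :=
  Quot.mk _ (Quot.mk _ y)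

/-- The closed stratum `Σ_λ^X ⊆ X^{(n)}` for a partition `λ` of `n` with `m` parts:
the image of the map `X^m → X^{(n)}` sending `(x_1,…,x_m)` to the class of the
multiset with `λ_i` copies of `x_i`. -/
def stratum (n m : ℕ) (lam : Fin m → ℕ) (X : Type) [TopologicalSpace X] (star : X) :
    Set (SymSmash n X star) :=
  {p | ∃ y : Fin n → X, p = symProj n X star y ∧
    ∃ x : Fin m → X, Multiset.map y Finset.univ.val =
      (Finset.univ.val : Multiset (Fin m)).bind
        (fun i => Multiset.replicate (lam i) (x i))}

/-- The circle `S^1`, as the unit sphere in `ℝ²`. -/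
abbrev Circle1 : Type := ↥(Metric.sphere (0 : EuclideanSpace ℝ (Fin 2)) 1)

open Set Topology

/-!
Reading the gaps between consecutive points around the circle, starting and ending at the basepoint,
as barycentric coordinates turns a multiset of `n` points of the circle into a point of the simplex
on the vertices `0, …, n`. In this way the stratum is the quotient of the complex `K`, whose faces
miss `a - 1` consecutive vertices other than `0` and `n` (the `a` points these gaps separate
coincide), by the subcomplex `A` of the faces missing `0` or `n` (some point is the basepoint).

Moving the vertices, one at a time and in increasing order, to the nearest lower vertex congruent to
`0` or `1` modulo `a` gives simplicial maps of the pair `(K, A)` to itself, each contiguous to the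
one before. So `K / A` is homotopy equivalent to the analogous quotient of the full subcomplex of
`K` on the `2m + ε + 3` vertices congruent to `0` or `1`. The faces of the latter are the sets
missing some of these vertices other than `0` and `n`, and the points where the coordinates at `0`
and `n` do not vanish form a Euclidean space of dimension `2m + ε + 1`, whose one-point
compactification is the sphere.
-/

/-! ### Quotients collapsing a subset -/

section IsCollapse

variable {X Y S T : Type*} [TopologicalSpace X] [TopologicalSpace Y] [TopologicalSpace S]
  [TopologicalSpace T] {A : Set X} {B : Set Y} {π : X → S} {ρ : Y → T}

/-- `π` exhibits `S` as the quotient space `X / A`, in which the points of `A` are identified. -/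
structure IsCollapse (π : X → S) (A : Set X) : Prop extends IsQuotientMap π where
  apply_eq_iff {x x' : X} : π x = π x' ↔ x = x' ∨ x ∈ A ∧ x' ∈ A

namespace IsCollapse

theorem apply_eq_of_mapsTo (hπ : IsCollapse π A) (hρ : IsCollapse ρ B) {f : X → Y}
    (hf : MapsTo f A B) {x x' : X} (h : π x = π x') : ρ (f x) = ρ (f x') := by
  rw [hρ.apply_eq_iff]
  exact (hπ.apply_eq_iff.1 h).imp (congrArg f) (And.imp (@hf x) (@hf x'))

/-- The map of quotients `X / A → Y / B` induced by a map of pairs `(X, A) → (Y, B)`. -/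
noncomputable def map (hπ : IsCollapse π A) (hρ : IsCollapse ρ B) (f : C(X, Y))
    (hf : MapsTo f A B) : C(S, T) :=
  IsQuotientMap.lift (f := ⟨π, hπ.continuous⟩) hπ.toIsQuotientMap
    ⟨ρ ∘ f, hρ.continuous.comp f.continuous⟩ fun _ _ => hπ.apply_eq_of_mapsTo hρ hf

theorem map_apply (hπ : IsCollapse π A) (hρ : IsCollapse ρ B) (f : C(X, Y))
    (hf : MapsTo f A B) (x : X) : hπ.map hρ f hf (π x) = ρ (f x) :=
  DFunLike.congr_fun (IsQuotientMap.lift_comp (f := ⟨π, hπ.continuous⟩) hπ.toIsQuotientMap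
    ⟨ρ ∘ f, hρ.continuous.comp f.continuous⟩ fun _ _ => hπ.apply_eq_of_mapsTo hρ hf) x

theorem map_id (hπ : IsCollapse π A) :
    hπ.map hπ (ContinuousMap.id X) (mapsTo_id A) = ContinuousMap.id S := by
  ext s
  obtain ⟨x, rfl⟩ := hπ.surjective s
  exact hπ.map_apply hπ _ _ x

theorem map_comp_map (hπ : IsCollapse π A) (hρ : IsCollapse ρ B) {f : C(X, Y)} {g : C(Y, X)}
    (hf : MapsTo f A B) (hg : MapsTo g B A) :
    (hρ.map hπ g hg).comp (hπ.map hρ f hf) = hπ.map hπ (g.comp f) (hg.comp hf) := by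
  ext s
  obtain ⟨x, rfl⟩ := hπ.surjective s
  simp only [ContinuousMap.comp_apply, map_apply]

theorem homeomorph_comp {S' : Type*} [TopologicalSpace S'] (hπ : IsCollapse π A) (e : S ≃ₜ S') :
    IsCollapse (e ∘ π) A where
  toIsQuotientMap := e.isQuotientMap.comp hπ.toIsQuotientMap
  apply_eq_iff := e.injective.eq_iff.trans hπ.apply_eq_iff

theorem homotopic_map (hπ : IsCollapse π A) (hρ : IsCollapse ρ B) {f g : C(X, Y)}
    (hf : MapsTo f A B) (hg : MapsTo g A B)
    (h : ContinuousMap.HomotopicWith f g fun k => MapsTo k A B) :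
    (hπ.map hρ f hf).Homotopic (hπ.map hρ g hg) := by
  obtain ⟨H⟩ := h
  let G (t : unitInterval) : C(S, T) := hπ.map hρ (H.toHomotopy.curry t) (H.prop t)
  have hG (t : unitInterval) (x : X) : G t (π x) = ρ (H (t, x)) := hπ.map_apply hρ _ _ x
  refine ⟨⟨⟨fun p => G p.1 p.2, hπ.continuous_lift_prod_right ?_⟩, fun s => ?_, fun s => ?_⟩⟩
  · simp only [hG]
    exact hρ.continuous.comp H.continuous
  all_goals
    obtain ⟨x, rfl⟩ := hπ.surjective s
    simp only [hG, ContinuousMap.HomotopyWith.apply_zero, ContinuousMap.HomotopyWith.apply_one,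
      map_apply]

theorem nonempty_homotopyEquiv (hπ : IsCollapse π A) (hρ : IsCollapse ρ B) {f : C(X, Y)}
    {g : C(Y, X)} (hf : MapsTo f A B) (hg : MapsTo g B A)
    (hgf : ContinuousMap.HomotopicWith (g.comp f) (.id X) fun k => MapsTo k A A)
    (hfg : ContinuousMap.HomotopicWith (f.comp g) (.id Y) fun k => MapsTo k B B) :
    Nonempty (ContinuousMap.HomotopyEquiv S T) := by
  refine ⟨⟨hπ.map hρ f hf, hρ.map hπ g hg, ?_, ?_⟩⟩
  · rw [map_comp_map, ← hπ.map_id]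
    exact hπ.homotopic_map hπ _ _ hgf
  · rw [map_comp_map, ← hρ.map_id]
    exact hρ.homotopic_map hρ _ _ hfg

end IsCollapse

end IsCollapse

section OnePoint

variable {U X : Type*} [TopologicalSpace U] [TopologicalSpace X] {i : U → X}

theorem continuous_extend_onePoint [T2Space X] (hi : IsOpenEmbedding i) :
    Continuous (Function.extend i ((↑) : U → OnePoint U) fun _ => OnePoint.infty) := by
  set q : X → OnePoint U := Function.extend i (↑) fun _ => OnePoint.infty
  have hq (u : U) : q (i u) = u := hi.injective.extend_apply _ _ u
  have hq' {x : X} (hx : x ∉ range i) : q x = OnePoint.infty := Function.extend_apply' _ _ x hx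
  refine continuous_iff_isClosed.2 fun C hC => ?_
  by_cases h : OnePoint.infty ∈ C
  · have hpre : q ⁻¹' C = (i '' ((↑) ⁻¹' C : Set U)ᶜ)ᶜ := by
      ext x
      by_cases hx : x ∈ range i
      · obtain ⟨u, rfl⟩ := hx
        simp [hq, hi.injective.mem_set_image]
      · simp only [mem_preimage, hq' hx, h, mem_compl_iff, true_iff]
        exact fun hx' => hx (image_subset_range _ _ hx')
    rw [hpre, isClosed_compl_iff]
    exact hi.isOpenMap _ (((OnePoint.isClosed_iff_of_mem h).1 hC).isOpen_compl)
  · have hpre : q ⁻¹' C = i '' ((↑) ⁻¹' C) := by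
      ext x
      by_cases hx : x ∈ range i
      · obtain ⟨u, rfl⟩ := hx
        simp [hq, hi.injective.mem_set_image]
      · simp only [mem_preimage, hq' hx, h, false_iff]
        exact fun hx' => hx (image_subset_range _ _ hx')
    rw [hpre]
    exact (((OnePoint.isClosed_iff_of_notMem h).1 hC).2.image hi.continuous).isClosed

theorem isCollapse_extend_onePoint [CompactSpace X] [T2Space X] (hi : IsOpenEmbedding i)
    (hne : (range i)ᶜ.Nonempty) :
    IsCollapse (Function.extend i ((↑) : U → OnePoint U) fun _ => OnePoint.infty)
      (range i)ᶜ := by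
  have : LocallyCompactSpace U := hi.locallyCompactSpace
  have : T2Space U := hi.isEmbedding.t2Space
  set q : X → OnePoint U := Function.extend i (↑) fun _ => OnePoint.infty
  have hq (u : U) : q (i u) = u := hi.injective.extend_apply _ _ u
  have hq' {x : X} (hx : x ∉ range i) : q x = OnePoint.infty := Function.extend_apply' _ _ x hx
  have hcont : Continuous q := continuous_extend_onePoint hi
  have hsurj : Function.Surjective q := by
    intro p
    induction p using OnePoint.rec with
    | infty => exact hne.imp fun x hx => hq' hx
    | coe u => exact ⟨i u, hq u⟩
  refine ⟨hcont.isClosedMap.isQuotientMap hcont hsurj, fun {x x'} => ?_⟩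
  by_cases hx : x ∈ range i <;> by_cases hx' : x' ∈ range i
  · obtain ⟨u, rfl⟩ := hx
    obtain ⟨u', rfl⟩ := hx'
    simp [hq, hi.injective.eq_iff]
  · obtain ⟨u, rfl⟩ := hx
    simp [hq, hq' hx', ne_of_mem_of_not_mem (mem_range_self u) hx']
  · obtain ⟨u', rfl⟩ := hx'
    simp [hq, hq' hx, (ne_of_mem_of_not_mem (mem_range_self u') hx).symm]
  · simp [hq' hx, hq' hx', hx, hx']

end OnePoint

/-! ### Realizations of simplicial complexes -/

section Realization

variable {V W : Type*} [Fintype V] [Fintype W]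

theorem support_stdSimplex_map_subset (f : V → W) (x : stdSimplex ℝ V) :
    Function.support (stdSimplex.map f x) ⊆ f '' Function.support x := by
  classical
  intro w hw
  rw [Function.mem_support, stdSimplex.map_coe, FunOnFinite.linearMap_apply_apply] at hw
  obtain ⟨v, hv, hxv⟩ := Finset.exists_ne_zero_of_sum_ne_zero hw
  exact ⟨v, hxv, by simpa using hv⟩

/-- The point of the segment from `x` to `y` in the standard simplex with parameter `t`. -/
noncomputable def segmentPoint (x y : stdSimplex ℝ V) (t : unitInterval) : stdSimplex ℝ V :=
  ⟨AffineMap.lineMap x.1 y.1 (t : ℝ), (convex_stdSimplex ℝ V).lineMap_mem x.2 y.2 t.2⟩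

theorem segmentPoint_apply (x y : stdSimplex ℝ V) (t : unitInterval) (v : V) :
    segmentPoint x y t v = (1 - t) * x v + t * y v :=
  congrFun (AffineMap.lineMap_apply_module x.1 y.1 (t : ℝ)) v

theorem segmentPoint_zero (x y : stdSimplex ℝ V) : segmentPoint x y 0 = x :=
  Subtype.ext (AffineMap.lineMap_apply_zero _ _)

theorem segmentPoint_one (x y : stdSimplex ℝ V) : segmentPoint x y 1 = y :=
  Subtype.ext (AffineMap.lineMap_apply_one _ _)

theorem support_segmentPoint_subset (x y : stdSimplex ℝ V) (t : unitInterval) :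
    Function.support (segmentPoint x y t) ⊆ Function.support x ∪ Function.support y := by
  intro v hv
  by_contra h
  simp only [mem_union, Function.mem_support, not_or, not_not] at h
  exact hv (by rw [segmentPoint_apply, h.1, h.2, mul_zero, mul_zero, add_zero])

theorem continuous_segmentPoint {Z : Type*} [TopologicalSpace Z] {x y : Z → stdSimplex ℝ V}
    {t : Z → unitInterval} (hx : Continuous x) (hy : Continuous y) (ht : Continuous t) :
    Continuous fun z => segmentPoint (x z) (y z) (t z) := by
  have ht' : Continuous fun z => (t z : ℝ) := continuous_subtype_val.comp ht
  refine Continuous.subtype_mk ?_ _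
  simp only [AffineMap.lineMap_apply_module]
  exact ((continuous_const.sub ht').smul (continuous_subtype_val.comp hx)).add
    (ht'.smul (continuous_subtype_val.comp hy))

/-- The geometric realization of the simplicial complex with faces `K`, as the set of the points
of the standard simplex whose barycentric coordinates are supported on a face. The empty set is
allowed as a face, and not every vertex has to be one. -/
def realization (K : LowerSet (Set V)) : Set (stdSimplex ℝ V) :=
  {x | Function.support x ∈ K}

variable {K A : LowerSet (Set V)} {L B : LowerSet (Set W)}

theorem mem_realization {x : stdSimplex ℝ V} : x ∈ realization K ↔ Function.support x ∈ K :=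
  Iff.rfl

theorem continuous_stdSimplex_apply (v : V) : Continuous fun x : stdSimplex ℝ V => x v :=
  (continuous_apply v).comp continuous_subtype_val

theorem isClosed_realization (K : LowerSet (Set V)) : IsClosed (realization K) := by
  have h : realization K = ⋃ σ ∈ K, {x | ∀ v ∉ σ, x v = 0} := by
    ext x
    simp only [mem_realization, mem_iUnion, exists_prop, mem_ofPred_eq]
    constructor
    · exact fun hx => ⟨_, hx, fun v => Function.notMem_support.1⟩
    · rintro ⟨σ, hσ, hx⟩
      exact K.lower (fun v hv => by_contra fun hvσ => hv (hx v hvσ)) hσ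
  rw [h]
  refine (Set.toFinite _).isClosed_biUnion fun σ _ => ?_
  simp only [ofPred_forall]
  exact isClosed_biInter fun v _ => isClosed_eq (continuous_stdSimplex_apply v) continuous_const

instance (K : LowerSet (Set V)) : CompactSpace (realization K) :=
  isCompact_iff_compactSpace.1 (isClosed_realization K).isCompact

/-- The subspace of `realization K` which realizes the subcomplex `K ⊓ A` of `K`. -/
def subrealization (K A : LowerSet (Set V)) : Set (realization K) :=
  (↑) ⁻¹' realization A

/-- The map of realizations induced by a simplicial map. -/
noncomputable def realizationMap (f : V → W) (hf : ∀ σ ∈ K, f '' σ ∈ L) :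
    C(realization K, realization L) where
  toFun x := ⟨stdSimplex.map f x, L.lower (support_stdSimplex_map_subset f x) (hf _ x.2)⟩
  continuous_toFun := ((stdSimplex.continuous_map f).comp continuous_subtype_val).subtype_mk _

theorem mapsTo_realizationMap (f : V → W) (hf : ∀ σ ∈ K, f '' σ ∈ L) (hA : ∀ σ ∈ A, f '' σ ∈ B) :
    MapsTo (realizationMap f hf) (subrealization K A) (subrealization L B) :=
  fun x hx => B.lower (support_stdSimplex_map_subset f x) (hA _ hx)

theorem realizationMap_id (h : ∀ σ ∈ K, id '' σ ∈ K) :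
    realizationMap id h = ContinuousMap.id (realization K) := by
  ext x : 2
  exact stdSimplex.map_id_apply _

theorem realizationMap_comp {U : Type*} [Fintype U] {M : LowerSet (Set U)} {f : V → W} {g : W → U}
    (hf : ∀ σ ∈ K, f '' σ ∈ L) (hg : ∀ σ ∈ L, g '' σ ∈ M) (hgf : ∀ σ ∈ K, (g ∘ f) '' σ ∈ M) :
    (realizationMap g hg).comp (realizationMap f hf) = realizationMap (g ∘ f) hgf := by
  ext x : 2
  exact (stdSimplex.map_comp_apply f g _)

theorem realizationMap_homotopicWith {f g : V → W} (hf : ∀ σ ∈ K, f '' σ ∈ L)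
    (hg : ∀ σ ∈ K, g '' σ ∈ L) (hL : ∀ σ ∈ K, f '' σ ∪ g '' σ ∈ L)
    (hB : ∀ σ ∈ A, f '' σ ∪ g '' σ ∈ B) :
    ContinuousMap.HomotopicWith (realizationMap f hf) (realizationMap g hg)
      fun k => MapsTo k (subrealization K A) (subrealization L B) := by
  have hsupp (t : unitInterval) (x : stdSimplex ℝ V) :
      Function.support (segmentPoint (stdSimplex.map f x) (stdSimplex.map g x) t) ⊆
        f '' Function.support x ∪ g '' Function.support x :=
    (support_segmentPoint_subset _ _ t).trans (union_subset_union
      (support_stdSimplex_map_subset f x) (support_stdSimplex_map_subset g x))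
  have hcont : Continuous fun p : unitInterval × realization K =>
      segmentPoint (stdSimplex.map f p.2) (stdSimplex.map g p.2) p.1 := by
    have hmap (k : V → W) : Continuous fun p : unitInterval × realization K =>
        stdSimplex.map k (p.2 : stdSimplex ℝ V) :=
      (stdSimplex.continuous_map k).comp (continuous_subtype_val.comp continuous_snd)
    exact continuous_segmentPoint (hmap f) (hmap g) continuous_fst
  let H : C(unitInterval × realization K, realization L) :=
    ⟨fun p => ⟨segmentPoint (stdSimplex.map f p.2) (stdSimplex.map g p.2) p.1,
      L.lower (hsupp p.1 p.2) (hL _ p.2.2)⟩, hcont.subtype_mk _⟩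
  refine ⟨{ toContinuousMap := H, map_zero_left := ?_, map_one_left := ?_, prop' := ?_ }⟩
  · exact fun x => Subtype.ext (segmentPoint_zero _ _)
  · exact fun x => Subtype.ext (segmentPoint_one _ _)
  · intro t x hx
    exact B.lower (hsupp t x) (hB _ hx)

end Realization

/-! ### A complex with a sphere as quotient -/

section MinCoord

variable {ι : Type*} [Fintype ι] [Nonempty ι]

/-- The least coordinate of `h`. -/
noncomputable def minCoord (h : ι → ℝ) : ℝ :=
  Finset.univ.inf' Finset.univ_nonempty h

theorem minCoord_le (h : ι → ℝ) (v : ι) : minCoord h ≤ h v :=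
  Finset.inf'_le _ (Finset.mem_univ v)

theorem exists_eq_minCoord (h : ι → ℝ) : ∃ v, h v = minCoord h :=
  let ⟨v, _, hv⟩ := Finset.exists_mem_eq_inf' Finset.univ_nonempty h
  ⟨v, hv.symm⟩

theorem minCoord_eq {h : ι → ℝ} {c : ℝ} (hc : ∀ v, c ≤ h v) (hex : ∃ v, h v = c) :
    minCoord h = c := by
  obtain ⟨v, rfl⟩ := hex
  exact le_antisymm (minCoord_le h v) ((Finset.le_inf'_iff _ _).2 fun w _ => hc w)

theorem continuous_minCoord : Continuous (minCoord : (ι → ℝ) → ℝ) :=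
  Continuous.finset_inf'_apply _ fun v _ => continuous_apply v

end MinCoord

section Hollow

variable {V : Type*} {p q : V}

/-- The simplicial complex of the sets of vertices which do not contain both `p` and `q`. -/
def missing (p q : V) : LowerSet (Set V) where
  carrier := {σ | p ∉ σ ∨ q ∉ σ}
  lower' _ _ hτσ := Or.imp (mt (@hτσ p)) (mt (@hτσ q))

/-- The simplicial complex of the sets of vertices which do not contain all the vertices other than
`p` and `q`. -/
def hollow (p q : V) : LowerSet (Set V) where
  carrier := {σ | ∃ v : {v // v ≠ p ∧ v ≠ q}, ↑v ∉ σ}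
  lower' _ _ hτσ := Exists.imp fun v => mt (@hτσ v)

variable [Fintype V]

theorem mem_subrealization_missing {K : LowerSet (Set V)} {x : realization K} :
    x ∈ subrealization K (missing p q) ↔ x.1 p = 0 ∨ x.1 q = 0 :=
  or_congr Function.notMem_support Function.notMem_support

/-- Coordinates identifying the part of `realization (hollow p q)` where `x p` and `x q` do not
vanish with a Euclidean space. As some ratio `x v / x q` vanishes, the least of them is
`log (x p / x q)`; hence they determine the point, and they may take arbitrary real values. -/
noncomputable def hollowChart (p q : V) (x : stdSimplex ℝ V) (v : {v // v ≠ p ∧ v ≠ q}) : ℝ :=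
  x v / x q + Real.log (x p / x q)

theorem continuous_hollowChart (K : LowerSet (Set V)) :
    Continuous fun x : ↥(subrealization K (missing p q))ᶜ => hollowChart p q x.1.1 := by
  have happly (v : V) : Continuous fun x : ↥(subrealization K (missing p q))ᶜ =>
      x.1.1 v := (continuous_stdSimplex_apply v).comp (by fun_prop)
  have hne (x : ↥(subrealization K (missing p q))ᶜ) : x.1.1 p ≠ 0 ∧ x.1.1 q ≠ 0 :=
    not_or.1 (mt mem_subrealization_missing.2 x.2)
  refine continuous_pi fun v => ((happly v).div (happly q) fun x => (hne x).2).add ?_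
  exact ((happly p).div (happly q) fun x => (hne x).2).log fun x => div_ne_zero (hne x).1 (hne x).2

section Chart

variable [DecidableEq V] [Nonempty {v // v ≠ p ∧ v ≠ q}]

/-- The barycentric coordinates, up to a common factor, of the point of `realization (hollow p q)`
with parameter `h`; see `hollowChart` for the inverse map. -/
noncomputable def hollowWeight (h : {v // v ≠ p ∧ v ≠ q} → ℝ) (v : V) : ℝ :=
  if hv : v ≠ p ∧ v ≠ q then h ⟨v, hv⟩ - minCoord h
  else if v = p then Real.exp (minCoord h) else 1

theorem hollowWeight_coe (h : {v // v ≠ p ∧ v ≠ q} → ℝ) (v : {v // v ≠ p ∧ v ≠ q}) :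
    hollowWeight h v = h v - minCoord h := dif_pos v.2

theorem hollowWeight_left (h : {v // v ≠ p ∧ v ≠ q} → ℝ) :
    hollowWeight h p = Real.exp (minCoord h) := by
  simp [hollowWeight]

theorem hollowWeight_right (hpq : p ≠ q) (h : {v // v ≠ p ∧ v ≠ q} → ℝ) :
    hollowWeight h q = 1 := by
  simp [hollowWeight, hpq.symm]

theorem hollowWeight_nonneg (h : {v // v ≠ p ∧ v ≠ q} → ℝ) (v : V) : 0 ≤ hollowWeight h v := by
  unfold hollowWeight
  split_ifs
  exacts [sub_nonneg.2 (minCoord_le h _), (Real.exp_pos _).le, zero_le_one]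

theorem continuous_hollowWeight :
    Continuous (hollowWeight : ({v // v ≠ p ∧ v ≠ q} → ℝ) → V → ℝ) := by
  refine continuous_pi fun v => ?_
  unfold hollowWeight
  split_ifs
  exacts [(continuous_apply _).sub continuous_minCoord,
    Real.continuous_exp.comp continuous_minCoord, continuous_const]

theorem sum_hollowWeight_pos (h : {v // v ≠ p ∧ v ≠ q} → ℝ) : 0 < ∑ v, hollowWeight h v :=
  Finset.sum_pos' (fun v _ => hollowWeight_nonneg h v)
    ⟨p, Finset.mem_univ p, hollowWeight_left h ▸ Real.exp_pos _⟩

/-- The point of `realization (hollow p q)` with parameter `h`. -/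
noncomputable def hollowPoint (h : {v // v ≠ p ∧ v ≠ q} → ℝ) : realization (hollow p q) where
  val := ⟨(∑ v, hollowWeight h v)⁻¹ • hollowWeight h, fun v =>
    mul_nonneg (inv_nonneg.2 (sum_hollowWeight_pos h).le) (hollowWeight_nonneg h v), by
    simp only [Pi.smul_apply, smul_eq_mul, ← Finset.mul_sum]
    exact inv_mul_cancel₀ (sum_hollowWeight_pos h).ne'⟩
  property := by
    obtain ⟨v, hv⟩ := exists_eq_minCoord h
    refine ⟨v, Function.notMem_support.2 (mul_eq_zero_of_right _ ?_)⟩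
    rw [hollowWeight_coe, hv, sub_self]

theorem hollowPoint_apply (h : {v // v ≠ p ∧ v ≠ q} → ℝ) (v : V) :
    (hollowPoint h).1 v = (∑ v, hollowWeight h v)⁻¹ * hollowWeight h v := rfl

theorem continuous_hollowPoint :
    Continuous (hollowPoint : ({v // v ≠ p ∧ v ≠ q} → ℝ) → realization (hollow p q)) := by
  have hw (v : V) : Continuous fun h : {v // v ≠ p ∧ v ≠ q} → ℝ => hollowWeight h v :=
    (continuous_apply v).comp continuous_hollowWeight
  refine Continuous.subtype_mk (Continuous.subtype_mk ?_ _) _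
  exact ((continuous_finsetSum _ fun v _ => hw v).inv₀ fun h => (sum_hollowWeight_pos h).ne').smul
    continuous_hollowWeight

theorem hollowPoint_notMem (hpq : p ≠ q) (h : {v // v ≠ p ∧ v ≠ q} → ℝ) :
    hollowPoint h ∉ subrealization (hollow p q) (missing p q) := by
  rw [mem_subrealization_missing, not_or, hollowPoint_apply, hollowPoint_apply,
    hollowWeight_left, hollowWeight_right hpq]
  have hsum := inv_ne_zero (sum_hollowWeight_pos h).ne'
  exact ⟨mul_ne_zero hsum (Real.exp_pos _).ne', mul_ne_zero hsum one_ne_zero⟩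

theorem hollowChart_hollowPoint (hpq : p ≠ q) (h : {v // v ≠ p ∧ v ≠ q} → ℝ) :
    hollowChart p q (hollowPoint h) = h := by
  funext v
  have hsum := inv_ne_zero (sum_hollowWeight_pos h).ne'
  simp only [hollowChart, hollowPoint_apply, mul_div_mul_left _ _ hsum, hollowWeight_coe,
    hollowWeight_left, hollowWeight_right hpq, div_one, Real.log_exp, sub_add_cancel]

theorem hollowWeight_hollowChart {x : realization (hollow p q)} (hp : x.1 p ≠ 0) (hq : x.1 q ≠ 0)
    (v : V) : hollowWeight (hollowChart p q x) v = x.1 v / x.1 q := by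
  have hmin : minCoord (hollowChart p q x) = Real.log (x.1 p / x.1 q) := by
    obtain ⟨v, hv⟩ := x.2
    refine minCoord_eq (fun w => ?_) ⟨v, ?_⟩
    · exact le_add_of_nonneg_left (div_nonneg (stdSimplex.zero_le x.1 w) (stdSimplex.zero_le x.1 q))
    · rw [hollowChart, Function.notMem_support.1 hv, zero_div, zero_add]
  have hpos {v : V} (hv : x.1 v ≠ 0) : 0 < x.1 v := (stdSimplex.zero_le x.1 v).lt_of_ne' hv
  unfold hollowWeight
  split_ifs with hv hvp
  · rw [hmin, hollowChart, add_sub_cancel_right]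
  · rw [hmin, hvp, Real.exp_log (div_pos (hpos hp) (hpos hq))]
  · rw [not_and_not_right.1 hv hvp, div_self hq]

theorem hollowPoint_hollowChart {x : realization (hollow p q)}
    (hx : x ∉ subrealization (hollow p q) (missing p q)) : hollowPoint (hollowChart p q x) = x := by
  rw [mem_subrealization_missing, not_or] at hx
  refine Subtype.ext (stdSimplex.ext (funext fun v => ?_))
  rw [hollowPoint_apply]
  simp only [hollowWeight_hollowChart hx.1 hx.2]
  rw [← Finset.sum_div, stdSimplex.sum_eq_one, one_div, inv_inv, mul_div_cancel₀ _ hx.2]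

/-- The part of `realization (hollow p q)` where the coordinates at `p` and `q` do not vanish is a
Euclidean space. -/
noncomputable def hollowHomeomorph (hpq : p ≠ q) :
    ({v // v ≠ p ∧ v ≠ q} → ℝ) ≃ₜ ↥(subrealization (hollow p q) (missing p q))ᶜ where
  toFun h := ⟨hollowPoint h, hollowPoint_notMem hpq h⟩
  invFun x := hollowChart p q x.1.1
  left_inv := hollowChart_hollowPoint hpq
  right_inv x := Subtype.ext (hollowPoint_hollowChart x.2)
  continuous_toFun := continuous_hollowPoint.subtype_mk _
  continuous_invFun := continuous_hollowChart _

theorem isOpenEmbedding_hollowPoint (hpq : p ≠ q) :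
    IsOpenEmbedding (hollowPoint : _ → realization (hollow p q)) :=
  ((isClosed_realization _).preimage continuous_subtype_val).isOpen_compl
    |>.isOpenEmbedding_subtypeVal.comp (hollowHomeomorph hpq).isOpenEmbedding

theorem compl_range_hollowPoint (hpq : p ≠ q) :
    (range (hollowPoint : _ → realization (hollow p q)))ᶜ =
      subrealization (hollow p q) (missing p q) := by
  rw [compl_eq_comm]
  ext x
  exact ⟨fun hx => ⟨_, hollowPoint_hollowChart hx⟩, fun ⟨h, hx⟩ => hx ▸ hollowPoint_notMem hpq h⟩

end Chart

theorem card_ne_and_ne_add_two [DecidableEq V] (hpq : p ≠ q) :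
    Fintype.card {v // v ≠ p ∧ v ≠ q} + 2 = Fintype.card V := by
  rw [Fintype.card_of_subtype ({p, q} : Finset V)ᶜ (by simp), ← Finset.card_pair hpq]
  exact Finset.card_compl_add_card _

theorem exists_isCollapse_sphere (hpq : p ≠ q) {d : ℕ}
    (hV : Fintype.card V = d + 3) :
    ∃ ρ : realization (hollow p q) → Metric.sphere (0 : EuclideanSpace ℝ (Fin (d + 2))) 1,
      IsCollapse ρ (subrealization (hollow p q) (missing p q)) := by
  classical
  have hcard : Fintype.card {v // v ≠ p ∧ v ≠ q} = d + 1 := by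
    have := card_ne_and_ne_add_two hpq
    lia
  have hrest : Nonempty {v // v ≠ p ∧ v ≠ q} := Fintype.card_pos_iff.1 (hcard ▸ d.succ_pos)
  have hne : (range (hollowPoint : _ → realization (hollow p q)))ᶜ.Nonempty := by
    rw [compl_range_hollowPoint hpq]
    obtain ⟨v⟩ := hrest
    refine ⟨⟨stdSimplex.vertex p, v, ?_⟩, mem_subrealization_missing.2 (Or.inr ?_)⟩
    · simp [v.2.1]
    · simp [hpq.symm]
  have hcollapse := isCollapse_extend_onePoint (isOpenEmbedding_hollowPoint hpq) hne
  rw [compl_range_hollowPoint hpq] at hcollapse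
  exact ⟨_, hcollapse.homeomorph_comp (onePointEquivSphereOfFinrankEq (by simp [hcard]))⟩

end Hollow

/-! ### Gaps between integers -/

section Collapse

/-- `HasGap a n T`: some `a - 1` consecutive integers of `[1, n - 1]` avoid `T`. -/
def HasGap (a n : ℕ) (T : Set ℕ) : Prop :=
  ∃ w, 1 ≤ w ∧ w + a ≤ n + 1 ∧ ∀ j ∈ T, w ≤ j → w + a ≤ j + 1

/-- The map fixing the integers congruent to `0` or `1` modulo `a` and sending every other integer
to the preceding such one. -/
def collapse (a i : ℕ) : ℕ := a * (i / a) + min (i % a) 1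

/-- Apply `collapse a` to the integers below `k` only. -/
def partialCollapse (a k i : ℕ) : ℕ := if i < k then collapse a i else i

variable {a n k i : ℕ} {S T : Set ℕ}

theorem HasGap.mono (h : HasGap a n T) (hST : S ⊆ T) : HasGap a n S :=
  let ⟨w, hw, hwn, hwT⟩ := h
  ⟨w, hw, hwn, fun j hj => hwT j (hST hj)⟩

theorem collapse_le (a i : ℕ) : collapse a i ≤ i :=
  (Nat.add_le_add_left (min_le_left _ _) _).trans_eq (Nat.div_add_mod i a)

theorem collapse_eq_self (hi : i % a ≤ 1) : collapse a i = i := by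
  rw [collapse, min_eq_left hi, Nat.div_add_mod]

theorem collapse_mod_le (ha : 2 ≤ a) (i : ℕ) : collapse a i % a ≤ 1 := by
  rw [collapse, Nat.mul_add_mod, Nat.mod_eq_of_lt (by lia)]
  exact min_le_right _ _

theorem collapse_eq_zero_iff : collapse a i = 0 ↔ i = 0 := by
  constructor
  · intro h
    have h' : a * (i / a) = 0 ∧ i % a = 0 := by unfold collapse at h; lia
    rw [← Nat.div_add_mod i a, h'.1, h'.2]
  · rintro rfl
    exact Nat.le_zero.1 (collapse_le a 0)

theorem partialCollapse_le (a k i : ℕ) : partialCollapse a k i ≤ i := by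
  unfold partialCollapse
  split_ifs
  exacts [collapse_le a i, le_rfl]

theorem partialCollapse_eq_zero_iff : partialCollapse a k i = 0 ↔ i = 0 := by
  unfold partialCollapse
  split_ifs
  exacts [collapse_eq_zero_iff, Iff.rfl]

theorem mod_le_of_mem_image_partialCollapse (ha : 2 ≤ a) {j : ℕ}
    (hj : j ∈ partialCollapse a k '' T) (hjk : j < k) : j % a ≤ 1 := by
  obtain ⟨i, -, rfl⟩ := hj
  by_cases hik : i < k
  · rw [partialCollapse, if_pos hik]
    exact collapse_mod_le ha i
  · rw [partialCollapse, if_neg hik] at hjk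
    exact absurd hjk hik

theorem partialCollapse_zero (a : ℕ) : partialCollapse a 0 = id :=
  funext fun _ => if_neg (Nat.not_lt_zero _)

theorem partialCollapse_self : partialCollapse a k k = k := if_neg (lt_irrefl k)

theorem partialCollapse_succ_self : partialCollapse a (k + 1) k = collapse a k :=
  if_pos (Nat.lt_succ_self k)

theorem partialCollapse_succ_of_ne (h : i ≠ k) :
    partialCollapse a (k + 1) i = partialCollapse a k i := by
  simp only [partialCollapse, Nat.lt_succ_iff_lt_or_eq, h, or_false]

theorem eq_mul_of_mod_le {p j : ℕ} (hj : j % a ≤ 1) (h₁ : a * p + 2 ≤ j) (h₂ : j ≤ a * (p + 1)) :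
    j = a * (p + 1) := by
  refine h₂.antisymm (not_lt.1 fun h => ?_)
  rw [show j = a * p + (j - a * p) by lia, Nat.mul_add_mod, Nat.mod_eq_of_lt (by lia)] at hj
  lia

/-- Collapsing an element `k` into the gap of `S` opens another gap, just below `collapse a k`. -/
theorem HasGap.insert_collapse (ha : 2 ≤ a) (hS : HasGap a n S) (hk : k ∈ S)
    (hlow : ∀ j ∈ S, j < k → j % a ≤ 1) : HasGap a n (insert (collapse a k) S) := by
  obtain ⟨w, hw, hwn, hwS⟩ := hS
  by_cases hc : w ≤ collapse a k → w + a ≤ collapse a k + 1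
  · exact ⟨w, hw, hwn, forall_mem_insert.2 ⟨hc, hwS⟩⟩
  push Not at hc
  obtain ⟨hwc, hcw⟩ := hc
  have hwk : w + a ≤ k + 1 := hwS k hk (hwc.trans (collapse_le a k))
  have hck : collapse a k = a * (k / a) + 1 := by
    refine congrArg _ (min_eq_right (not_lt.1 fun h => ?_))
    rw [collapse_eq_self h.le] at hcw
    lia
  have hka := Nat.div_add_mod k a
  have hka' := Nat.mod_lt k (by lia : 0 < a)
  obtain ⟨p, hp⟩ : ∃ p, k / a = p + 1 := by
    refine Nat.exists_eq_succ_of_ne_zero fun h => ?_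
    rw [h] at hka
    lia
  rw [hp] at hck hka
  have hpw : w ≤ a * (p + 1) := by lia
  have hpa : a * (p + 1) = a * p + a := by ring
  refine ⟨a * p + 2, by lia, by lia, forall_mem_insert.2 ⟨fun _ => by lia, fun j hj hpj => ?_⟩⟩
  by_contra! hjp
  have hjeq : j = a * (p + 1) := eq_mul_of_mod_le (hlow j hj (by lia)) hpj (by lia)
  have := hwS j hj (hjeq ▸ hpw)
  lia

theorem HasGap.image_partialCollapse_union_succ (ha : 2 ≤ a)
    (h : HasGap a n (partialCollapse a k '' T)) :
    HasGap a n (partialCollapse a k '' T ∪ partialCollapse a (k + 1) '' T) := by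
  by_cases hk : k ∈ T
  · have hk' : k ∈ partialCollapse a k '' T := ⟨k, hk, partialCollapse_self⟩
    refine (h.insert_collapse ha hk' fun j => mod_le_of_mem_image_partialCollapse ha).mono
      (union_subset (subset_insert _ _) ?_)
    rintro _ ⟨i, hi, rfl⟩
    rcases eq_or_ne i k with rfl | hik
    · exact Or.inl partialCollapse_succ_self
    · exact Or.inr ⟨i, hi, (partialCollapse_succ_of_ne hik).symm⟩
  · rwa [image_congr fun i hi => partialCollapse_succ_of_ne (ne_of_mem_of_not_mem hi hk),
      union_self]

theorem HasGap.image_partialCollapse (ha : 2 ≤ a) (h : HasGap a n T) (k : ℕ) :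
    HasGap a n (partialCollapse a k '' T) := by
  induction k with
  | zero => rwa [partialCollapse_zero, image_id]
  | succ k ih => exact (ih.image_partialCollapse_union_succ ha).mono subset_union_right

theorem HasGap.exists_mod_le_notMem (ha : 2 ≤ a) (h : HasGap a n T) :
    ∃ v, 0 < v ∧ v < n ∧ v % a ≤ 1 ∧ v ∉ T := by
  obtain ⟨w, hw, hwn, hwT⟩ := h
  obtain ⟨v, hwv, hvw, hv⟩ : ∃ v, w ≤ v ∧ v + 1 < w + a ∧ v % a ≤ 1 := by
    by_cases hwa : w % a ≤ 1
    · exact ⟨w, le_rfl, by lia, hwa⟩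
    · have hmod := Nat.mod_lt w (by lia : 0 < a)
      have hdiv := Nat.div_add_mod w a
      exact ⟨a * (w / a + 1), by lia, by lia, by simp⟩
  exact ⟨v, by lia, by lia, hv, fun hvT => not_le.2 hvw (hwT v hvT hwv)⟩

theorem hasGap_of_mod_le_notMem (hn : n % a ≤ 1) (hT : ∀ j ∈ T, j % a ≤ 1) {v : ℕ}
    (hv0 : 0 < v) (hvn : v < n) (hva : v % a ≤ 1) (hvT : v ∉ T) : HasGap a n T := by
  have hdiv := Nat.div_add_mod v a
  rcases Nat.le_one_iff_eq_zero_or_eq_one.1 hva with h | h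
  · obtain ⟨p, hp⟩ : ∃ p, v / a = p + 1 :=
      Nat.exists_eq_succ_of_ne_zero fun h' => by rw [h, h'] at hdiv; lia
    rw [h, hp, add_zero] at hdiv
    refine ⟨a * p + 2, by lia, by lia, fun j hj hpj => not_lt.1 fun hjp => hvT ?_⟩
    rwa [← hdiv, ← eq_mul_of_mod_le (hT j hj) hpj (by lia)]
  · rw [h] at hdiv
    set p := v / a
    have hpa : a * (p + 1) = a * p + a := by ring
    have hvan : v + a ≤ n + 1 := by
      by_contra! h'
      have := eq_mul_of_mod_le hn (by lia : a * p + 2 ≤ n) (by lia)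
      lia
    refine ⟨v, hv0, hvan, fun j hj hvj => not_lt.1 fun hjv => ?_⟩
    have hjv' : j ≠ v := ne_of_mem_of_not_mem hj hvT
    have := eq_mul_of_mod_le (hT j hj) (by lia : a * p + 2 ≤ j) (by lia)
    lia

theorem count_mod_le_one_mul (ha : 2 ≤ a) (q : ℕ) :
    Nat.count (fun i => i % a ≤ 1) (a * q) = 2 * q := by
  induction q with
  | zero => rw [mul_zero, mul_zero, Nat.count_zero]
  | succ q ih =>
    have hperiod : Nat.count (fun i => i % a ≤ 1) a = 2 := by
      rw [show a = 2 + (a - 2) by lia, Nat.count_add, Nat.count_of_forall fun i hi => ?_,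
        Nat.count_of_forall_not fun i hi => ?_]
      · rw [Nat.mod_eq_of_lt] <;> lia
      · rw [Nat.mod_eq_of_lt] <;> lia
    rw [Nat.mul_succ, Nat.count_add, ih]
    simp only [Nat.mul_add_mod]
    rw [hperiod, Nat.mul_succ]

theorem card_mod_le_one (ha : 2 ≤ a) {q r : ℕ} (hr : r ≤ 1) :
    Fintype.card {j : Fin (a * q + r + 1) // (j : ℕ) % a ≤ 1} = 2 * q + r + 1 := by
  have hcount : Nat.count (fun i => i % a ≤ 1) (a * q + (r + 1)) = 2 * q + (r + 1) := by
    rw [Nat.count_add, count_mod_le_one_mul ha]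
    simp only [Nat.mul_add_mod]
    rw [Nat.count_of_forall]
    intro i hi
    exact (Nat.mod_le _ _).trans (by lia)
  rw [add_assoc, add_assoc, ← hcount, Nat.count_eq_card_filter_range, Fintype.card_subtype,
    Finset.card_filter, Finset.card_filter,
    Fin.sum_univ_eq_sum_range fun i => if i % a ≤ 1 then 1 else 0]

end Collapse

section GapComplex

theorem image_union_image_mem_missing {V W : Type*} {p q : V} {p' q' : W} {f g : V → W}
    (hfp : ∀ v, f v = p' → v = p) (hfq : ∀ v, f v = q' → v = q)
    (hgp : ∀ v, g v = p' → v = p) (hgq : ∀ v, g v = q' → v = q) :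
    ∀ σ ∈ missing p q, f '' σ ∪ g '' σ ∈ missing p' q' := by
  have key {f : V → W} {p : V} {p' : W} (hf : ∀ v, f v = p' → v = p) {σ : Set V} (hp : p ∉ σ) :
      p' ∉ f '' σ := fun ⟨v, hv, hvp⟩ => hp (hf v hvp ▸ hv)
  rintro σ (hp | hq)
  · exact Or.inl fun h => h.elim (key hfp hp) (key hgp hp)
  · exact Or.inr fun h => h.elim (key hfq hq) (key hgq hq)

theorem image_mem_missing {V W : Type*} {p q : V} {p' q' : W} {f : V → W}
    (hp : ∀ v, f v = p' → v = p) (hq : ∀ v, f v = q' → v = q) :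
    ∀ σ ∈ missing p q, f '' σ ∈ missing p' q' := fun σ hσ => by
  simpa only [union_self] using image_union_image_mem_missing hp hq hp hq σ hσ

/-- The simplicial complex on the vertices `0, …, n` whose faces are the sets with a gap. -/
def gapComplex (a n : ℕ) : LowerSet (Set (Fin (n + 1))) where
  carrier := {σ | HasGap a n (Fin.val '' σ)}
  lower' _ _ hτσ h := h.mono (image_mono hτσ)

/-- The vertices of `gapComplex a n` fixed by `collapse a`. -/
abbrev Spine (a n : ℕ) : Type := {j : Fin (n + 1) // (j : ℕ) % a ≤ 1}

variable {a n : ℕ}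

/-- `partialCollapse a k` as a self-map of the vertices of `gapComplex a n`. -/
def partialCollapseFin (a k : ℕ) (i : Fin (n + 1)) : Fin (n + 1) :=
  ⟨partialCollapse a k i, (partialCollapse_le a k i).trans_lt i.2⟩

theorem eq_zero_of_partialCollapseFin_eq_zero {k : ℕ} (i : Fin (n + 1))
    (h : partialCollapseFin a k i = 0) : i = 0 :=
  Fin.ext (partialCollapse_eq_zero_iff.1 (congrArg Fin.val h))

theorem eq_last_of_partialCollapseFin_eq_last {k : ℕ} (i : Fin (n + 1))
    (h : partialCollapseFin a k i = Fin.last n) : i = Fin.last n :=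
  Fin.last_le_iff.1 (h ▸ partialCollapse_le a k i)

theorem image_val_image_partialCollapseFin (k : ℕ) (σ : Set (Fin (n + 1))) :
    Fin.val '' (partialCollapseFin a k '' σ) = partialCollapse a k '' (Fin.val '' σ) :=
  image_comm fun _ => rfl

theorem image_partialCollapseFin_mem (ha : 2 ≤ a) (k : ℕ) :
    ∀ σ ∈ gapComplex a n, partialCollapseFin a k '' σ ∈ gapComplex a n := fun σ hσ => by
  change HasGap _ _ _
  rw [image_val_image_partialCollapseFin]
  exact HasGap.image_partialCollapse ha hσ k

theorem partialCollapseFin_homotopicWith_id (ha : 2 ≤ a) (k : ℕ) :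
    ContinuousMap.HomotopicWith
      (realizationMap (partialCollapseFin a k) (image_partialCollapseFin_mem ha k))
      (.id (realization (gapComplex a n))) fun f =>
        MapsTo f (subrealization _ (missing 0 (Fin.last n)))
          (subrealization _ (missing 0 (Fin.last n))) := by
  induction k with
  | zero =>
    have hid : partialCollapseFin a 0 = (id : Fin (n + 1) → Fin (n + 1)) :=
      funext fun i => Fin.ext (congrFun (partialCollapse_zero a) i)
    simp only [hid, realizationMap_id]
    exact .refl _ (mapsTo_id _)
  | succ k ih =>
    refine (realizationMap_homotopicWith _ _ (fun σ hσ => ?_) ?_).symm.trans ih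
    · change HasGap _ _ _
      rw [image_union, image_val_image_partialCollapseFin, image_val_image_partialCollapseFin]
      exact (HasGap.image_partialCollapse ha hσ k).image_partialCollapse_union_succ ha
    · exact image_union_image_mem_missing eq_zero_of_partialCollapseFin_eq_zero
        eq_last_of_partialCollapseFin_eq_last eq_zero_of_partialCollapseFin_eq_zero
        eq_last_of_partialCollapseFin_eq_last

/-- `collapse a` as a retraction of the vertices of `gapComplex a n` onto the fixed ones. -/
def spineRetraction (ha : 2 ≤ a) (i : Fin (n + 1)) : Spine a n :=
  ⟨⟨collapse a i, (collapse_le a i).trans_lt i.2⟩, collapse_mod_le ha i⟩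

theorem spineRetraction_comp_val (ha : 2 ≤ a) :
    (spineRetraction ha : Fin (n + 1) → Spine a n) ∘ Subtype.val = id :=
  funext fun v => Subtype.ext (Fin.ext (collapse_eq_self v.2))

theorem val_comp_spineRetraction (ha : 2 ≤ a) :
    Subtype.val ∘ (spineRetraction ha : Fin (n + 1) → Spine a n) =
      partialCollapseFin a (n + 1) :=
  funext fun i => Fin.ext (if_pos i.2).symm

/-- The vertex `0` of the spine. -/
def spineZero (a n : ℕ) : Spine a n := ⟨0, (Nat.zero_mod a).trans_le zero_le_one⟩

/-- The vertex `n` of the spine. -/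
def spineLast (hn : n % a ≤ 1) : Spine a n := ⟨Fin.last n, hn⟩

theorem image_spineRetraction_mem_hollow (ha : 2 ≤ a) (hn : n % a ≤ 1) :
    ∀ σ ∈ gapComplex a n, spineRetraction ha '' σ ∈ hollow (spineZero a n) (spineLast hn) := by
  intro σ hσ
  have hgap : HasGap a n _ := image_partialCollapseFin_mem ha (n + 1) σ hσ
  obtain ⟨v, hv0, hvn, hva, hvσ⟩ := hgap.exists_mod_le_notMem ha
  refine ⟨⟨⟨⟨v, hvn.trans (Nat.lt_succ_self n)⟩, hva⟩, ?_, ?_⟩, ?_⟩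
  · exact fun h => hv0.ne' (congrArg (fun u : Spine a n => (u.1 : ℕ)) h)
  · exact fun h => hvn.ne (congrArg (fun u : Spine a n => (u.1 : ℕ)) h)
  · rw [← val_comp_spineRetraction ha, image_comp] at hvσ
    exact fun h => hvσ ⟨_, ⟨_, h, rfl⟩, rfl⟩

theorem image_val_mem_gapComplex (hn : n % a ≤ 1) :
    ∀ σ ∈ hollow (spineZero a n) (spineLast hn), Subtype.val '' σ ∈ gapComplex a n := by
  rintro σ ⟨⟨v, hv0, hvn⟩, hvσ⟩
  refine hasGap_of_mod_le_notMem hn (v := v) ?_ ?_ ?_ v.2 ?_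
  · rintro _ ⟨_, ⟨w, _, rfl⟩, rfl⟩
    exact w.2
  · exact Nat.pos_of_ne_zero fun h => hv0 (Subtype.ext (Fin.ext h))
  · exact Fin.val_lt_last fun h => hvn (Subtype.ext h)
  · rw [Fin.val_injective.mem_set_image, Subtype.val_injective.mem_set_image]
    exact hvσ

theorem nonempty_homotopyEquiv_of_isCollapse {S T : Type*} [TopologicalSpace S]
    [TopologicalSpace T] (ha : 2 ≤ a) (hn : n % a ≤ 1)
    {π : realization (gapComplex a n) → S}
    {ρ : realization (hollow (spineZero a n) (spineLast hn)) → T}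
    (hπ : IsCollapse π (subrealization _ (missing 0 (Fin.last n))))
    (hρ : IsCollapse ρ (subrealization _ (missing (spineZero a n) (spineLast hn)))) :
    Nonempty (ContinuousMap.HomotopyEquiv S T) := by
  have hret := image_spineRetraction_mem_hollow (n := n) ha hn
  have hval := image_val_mem_gapComplex hn
  have hretA := image_mem_missing (f := spineRetraction ha) (p' := spineZero a n)
    (q' := spineLast hn) (p := 0) (q := Fin.last n)
    (fun i hi => Fin.ext (collapse_eq_zero_iff.1 (congrArg (fun u : Spine a n => (u.1 : ℕ)) hi)))
    (fun i hi => Fin.last_le_iff.1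
      ((congrArg (fun u : Spine a n => (u.1 : ℕ)) hi).symm.trans_le (collapse_le a i)))
  have hvalA := image_mem_missing (f := (Subtype.val : Spine a n → _)) (p' := 0)
    (q' := Fin.last n) (fun v hv => Subtype.ext hv : ∀ v, _ → v = spineZero a n)
    (fun v hv => Subtype.ext hv : ∀ v, _ → v = spineLast hn)
  refine hπ.nonempty_homotopyEquiv hρ (mapsTo_realizationMap _ hret hretA)
    (mapsTo_realizationMap _ hval hvalA) ?_ ?_
  · rw [realizationMap_comp hret hval (by
      simpa only [val_comp_spineRetraction] using image_partialCollapseFin_mem ha (n + 1))]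
    simp only [val_comp_spineRetraction]
    exact partialCollapseFin_homotopicWith_id ha (n + 1)
  · rw [realizationMap_comp hval hret (by
      simpa only [spineRetraction_comp_val, image_id] using fun σ hσ => hσ)]
    simp only [spineRetraction_comp_val, realizationMap_id]
    exact .refl _ (mapsTo_id _)

theorem nonempty_homotopyEquiv_sphere {S : Type*} [TopologicalSpace S] (ha : 2 ≤ a) {m ε : ℕ}
    (hε : ε ≤ 1) (hn : n = a * (m + 1) + ε) {π : realization (gapComplex a n) → S}
    (hπ : IsCollapse π (subrealization _ (missing 0 (Fin.last n)))) :
    Nonempty (ContinuousMap.HomotopyEquiv S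
      (Metric.sphere (0 : EuclideanSpace ℝ (Fin (2 * m + ε + 2))) 1)) := by
  subst hn
  have hmod : (a * (m + 1) + ε) % a ≤ 1 := by
    rw [Nat.mul_add_mod]
    exact (Nat.mod_le _ _).trans hε
  have hpq : spineZero a (a * (m + 1) + ε) ≠ spineLast hmod := fun h =>
    (by positivity : 0 < a * (m + 1) + ε).ne (congrArg (fun u : Spine a _ => (u.1 : ℕ)) h)
  obtain ⟨ρ, hρ⟩ := exists_isCollapse_sphere hpq (d := 2 * m + ε)
    ((card_mod_le_one ha hε).trans (by ring))
  exact nonempty_homotopyEquiv_of_isCollapse ha hmod hπ hρ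

end GapComplex

/-! ### Symmetric smash products -/

section SymmetricSmash

/-- A tuple has an `a`-fold entry. -/
def HasFold {ι X : Type*} (a : ℕ) (y : ι → X) : Prop :=
  ∃ z, a ≤ (y ⁻¹' {z}).ncard

namespace HasFold

variable {ι X Y : Type*} {a : ℕ} {y : ι → X}

theorem comp_equiv (h : HasFold a y) (σ : ι ≃ ι) : HasFold a (y ∘ σ) := by
  obtain ⟨z, hz⟩ := h
  refine ⟨z, hz.trans_eq ?_⟩
  rw [preimage_comp, ← σ.image_symm_eq_preimage, ncard_image_of_injective _ σ.symm.injective]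

theorem comp [Finite ι] (h : HasFold a y) (f : X → Y) : HasFold a (f ∘ y) := by
  obtain ⟨z, hz⟩ := h
  exact ⟨f z, hz.trans (ncard_le_ncard fun i (hi : y i = z) => congrArg f hi)⟩

end HasFold

theorem hasFold_iff_exists_replicate_le {n a : ℕ} {X : Type*} {y : Fin n → X} :
    HasFold a y ↔ ∃ z, Multiset.replicate a z ≤ Multiset.map y Finset.univ.val := by
  classical
  refine exists_congr fun z => ?_
  rw [← Multiset.le_count_iff_replicate_le, Multiset.count_map, ncard_eq_toFinset_card']
  refine Eq.to_iff (congrArg (a ≤ Finset.card ·) (?_ : _ = Finset.univ.filter fun i => z = y i))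
  ext i
  simp only [mem_toFinset, mem_preimage, mem_singleton_iff, Finset.mem_filter, Finset.mem_univ,
    true_and, eq_comm]

theorem bind_replicate_ite_eq_add {X : Type*} {a l : ℕ} (x : Fin (1 + l) → X) :
    ((Finset.univ.val : Multiset (Fin (1 + l))).bind
      fun i => Multiset.replicate (if (i : ℕ) < 1 then a else 1) (x i)) =
        Multiset.replicate a (x (Fin.castAdd l 0)) +
          Multiset.map (fun i => x (Fin.natAdd 1 i)) Finset.univ.val := by
  change ∑ i : Fin (1 + l), Multiset.replicate (if (i : ℕ) < 1 then a else 1) (x i) = _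
  rw [Fin.sum_univ_add]
  congr 1
  · simp
  · simp only [Fin.val_natAdd, Nat.not_lt.2 (Nat.le_add_right 1 _), if_false,
      Multiset.replicate_one]
    exact Multiset.bind_singleton _ _

theorem exists_eq_bind_replicate_iff_hasFold {X : Type*} {a l : ℕ} {y : Fin (a + l) → X} :
    (∃ x : Fin (1 + l) → X, Multiset.map y Finset.univ.val =
      (Finset.univ.val : Multiset (Fin (1 + l))).bind
        fun i => Multiset.replicate (if (i : ℕ) < 1 then a else 1) (x i)) ↔ HasFold a y := by
  simp only [bind_replicate_ite_eq_add, hasFold_iff_exists_replicate_le]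
  constructor
  · rintro ⟨x, hx⟩
    exact ⟨_, hx ▸ Multiset.le_add_right _ _⟩
  · rintro ⟨z, hz⟩
    obtain ⟨R, hR⟩ := Multiset.le_iff_exists_add.1 hz
    obtain rfl : R.toList.length = l := by
      simpa using (congrArg Multiset.card hR).symm
    refine ⟨Fin.append (fun _ => z) R.toList.get, hR.trans ?_⟩
    simp only [Fin.append_left, Fin.append_right, Fin.univ_val_map, List.ofFn_get,
      Multiset.coe_toList]

section Basic

variable {n : ℕ} {X : Type} {star : X}

theorem mk_permRel_eq_iff {y y' : Fin n → X} :
    Quot.mk (permRel n X) y = Quot.mk (permRel n X) y' ↔ ∃ σ : Equiv.Perm (Fin n), y ∘ σ = y' := by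
  have heq : Equivalence (permRel n X) :=
    { refl := fun y => ⟨1, rfl⟩
      symm := by
        rintro y _ ⟨σ, rfl⟩
        exact ⟨σ⁻¹, by rw [Function.comp_assoc, ← Equiv.Perm.coe_mul, mul_inv_cancel]; rfl⟩
      trans := by
        rintro y _ _ ⟨σ, rfl⟩ ⟨τ, rfl⟩
        exact ⟨σ * τ, rfl⟩ }
  exact ⟨fun h => heq.eqvGen_iff.1 (Quot.eqvGen_exact h), fun h => Quot.sound h⟩

variable [TopologicalSpace X]

theorem symProj_eq_iff {y y' : Fin n → X} :
    symProj n X star y = symProj n X star y' ↔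
      (∃ σ : Equiv.Perm (Fin n), y ∘ σ = y') ∨ star ∈ range y ∧ star ∈ range y' := by
  have hstar (y : Fin n → X) : (∃ z : Fin n → X, Quot.mk (permRel n X) y = Quot.mk _ z ∧
      ∃ i, z i = star) ↔ star ∈ range y := by
    refine ⟨?_, fun h => ⟨y, rfl, h⟩⟩
    rintro ⟨z, h, i, hi⟩
    obtain ⟨σ, rfl⟩ := mk_permRel_eq_iff.1 h
    exact ⟨σ i, hi⟩
  have heq : Equivalence (infRel n X star) :=
    { refl := fun p => Or.inl rfl
      symm := by
        rintro p q (rfl | h)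
        · exact Or.inl rfl
        · exact Or.inr h.symm
      trans := by
        rintro p q r (rfl | ⟨hp, hq⟩) (rfl | ⟨hq', hr⟩)
        · exact Or.inl rfl
        · exact Or.inr ⟨hq', hr⟩
        · exact Or.inr ⟨hp, hq⟩
        · exact Or.inr ⟨hp, hr⟩ }
  have hinf : symProj n X star y = symProj n X star y' ↔
      infRel n X star (Quot.mk _ y) (Quot.mk _ y') :=
    ⟨fun h => heq.eqvGen_iff.1 (Quot.eqvGen_exact h), fun h => Quot.sound h⟩
  exact hinf.trans (or_congr mk_permRel_eq_iff (and_congr (hstar y) (hstar y')))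

theorem isQuotientMap_symProj (n : ℕ) (X : Type) [TopologicalSpace X] (star : X) :
    IsQuotientMap (symProj n X star) :=
  (isQuotientMap_quot_mk (r := infRel n X star)).comp (isQuotientMap_quot_mk (r := permRel n X))

theorem preimage_image_symProj (C : Set (Fin n → X)) :
    symProj n X star ⁻¹' (symProj n X star '' C) =
      (⋃ σ : Equiv.Perm (Fin n), {y | y ∘ σ ∈ C}) ∪
        {y | star ∈ range y ∧ ∃ y' ∈ C, star ∈ range y'} := by
  ext y
  simp only [mem_preimage, mem_image, mem_union, mem_iUnion, mem_ofPred_eq]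
  constructor
  · rintro ⟨y', hy', h⟩
    rcases symProj_eq_iff.1 h.symm with ⟨σ, rfl⟩ | h
    · exact Or.inl ⟨σ, hy'⟩
    · exact Or.inr ⟨h.1, y', hy', h.2⟩
  · rintro (⟨σ, hσ⟩ | ⟨h, y', hy', h'⟩)
    · exact ⟨_, hσ, (symProj_eq_iff.2 (Or.inl ⟨σ, rfl⟩)).symm⟩
    · exact ⟨y', hy', symProj_eq_iff.2 (Or.inr ⟨h', h⟩)⟩

theorem isClosedMap_symProj [T1Space X] : IsClosedMap (symProj n X star) := by
  intro C hC
  rw [← (isQuotientMap_symProj n X star).isClosed_preimage, preimage_image_symProj]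
  refine IsClosed.union ?_ (IsClosed.and ?_ isClosed_const)
  · exact isClosed_iUnion_of_finite fun σ =>
      hC.preimage (continuous_pi fun i => continuous_apply (σ i))
  · simp only [mem_range, ofPred_exists]
    exact isClosed_iUnion_of_finite fun i => isClosed_singleton.preimage (continuous_apply i)

end Basic

end SymmetricSmash

/-! ### Points on the circle -/

section OrderedPoints

theorem hasFold_iff_of_monotone {α : Type*} [PartialOrder α] {a n : ℕ} (ha : 1 ≤ a) {t : Fin n → α}
    (ht : Monotone t) : HasFold a t ↔ ∃ i j : Fin n, (i : ℕ) + a ≤ j + 1 ∧ t i = t j := by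
  have card_Icc (i j : Fin n) : (Icc i j).ncard = j + 1 - i := by
    rw [ncard_eq_toFinset_card', toFinset_Icc, Fin.card_Icc]
  constructor
  · rintro ⟨z, hz⟩
    have hne : (t ⁻¹' {z}).Nonempty := nonempty_of_ncard_ne_zero (by lia)
    obtain ⟨i, hi, hmin⟩ := exists_min_image (t ⁻¹' {z}) id (toFinite _) hne
    obtain ⟨j, hj, hmax⟩ := exists_max_image (t ⁻¹' {z}) id (toFinite _) hne
    have hcard : (t ⁻¹' {z}).ncard ≤ j + 1 - i := by
      rw [← card_Icc]
      exact ncard_le_ncard fun k hk => ⟨hmin k hk, hmax k hk⟩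
    exact ⟨i, j, by lia, hi.trans hj.symm⟩
  · rintro ⟨i, j, hij, h⟩
    refine ⟨t i, ?_⟩
    calc a ≤ (Icc i j).ncard := by rw [card_Icc]; lia
      _ ≤ (t ⁻¹' {t i}).ncard := ncard_le_ncard fun k hk =>
        le_antisymm ((ht hk.2).trans_eq h.symm) (ht hk.1)

section PartialSum

variable {n : ℕ} {g : Fin n → ℝ}

theorem monotone_partialSum (hg : ∀ i, 0 ≤ g i) : Monotone (Fin.partialSum g) :=
  Fin.monotone_iff_le_succ.2 fun i => by
    rw [Fin.partialSum_succ]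
    exact le_add_of_nonneg_right (hg i)

theorem partialSum_last (g : Fin n → ℝ) : Fin.partialSum g (Fin.last n) = ∑ i, g i := by
  simp [Fin.partialSum, List.sum_ofFn, List.take_of_length_le]

theorem continuous_partialSum (i : Fin (n + 1)) :
    Continuous fun g : Fin n → ℝ => Fin.partialSum g i := by
  induction i using Fin.induction with
  | zero => simpa only [Fin.partialSum_zero] using continuous_const
  | succ i ih =>
    simp only [Fin.partialSum_succ]
    exact ih.add (continuous_apply i)

theorem partialSum_eq_partialSum_iff (hg : ∀ i, 0 ≤ g i) {p q : Fin (n + 1)} (hpq : p ≤ q) :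
    Fin.partialSum g p = Fin.partialSum g q ↔
      ∀ k : Fin n, p ≤ k.castSucc → k.succ ≤ q → g k = 0 := by
  constructor
  · intro h k hpk hkq
    have hmono := monotone_partialSum hg
    have hk := Fin.partialSum_succ g k
    linarith [hmono hpk, hmono hkq, hg k]
  · intro h
    induction q using Fin.induction with
    | zero => rw [Fin.le_zero_iff.1 hpq]
    | succ q ih =>
      rcases hpq.eq_or_lt with rfl | hlt
      · rfl
      · have hpq' : p ≤ q.castSucc := Fin.le_castSucc_iff.2 hlt
        rw [Fin.partialSum_succ, h q hpq' le_rfl, add_zero]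
        exact ih hpq' fun k hpk hkq => h k hpk (hkq.trans (Fin.castSucc_le_succ q))

theorem exists_partialSum_eq {T : Fin (n + 1) → ℝ} (hT : Monotone T) (h₀ : T 0 = 0) :
    ∃ g : Fin n → ℝ, (∀ i, 0 ≤ g i) ∧ Fin.partialSum g = T := by
  refine ⟨fun i => -T i.castSucc + T i.succ, fun i => ?_, ?_⟩
  · exact le_neg_add_iff_le.2 (hT (Fin.castSucc_le_succ i))
  · simpa only [h₀, zero_vadd] using Fin.partialSum_left_neg T

end PartialSum

variable {a n : ℕ}

/-- The points `x₀, x₀ + x₁, …, x₀ + ⋯ + xₙ₋₁` of the unit interval, whose successive gaps are the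
barycentric coordinates of `x`. -/
def orderedPoints (x : stdSimplex ℝ (Fin (n + 1))) (i : Fin n) : ℝ :=
  Fin.partialSum x i.castSucc.succ

theorem continuous_orderedPoints (i : Fin n) :
    Continuous fun x : stdSimplex ℝ (Fin (n + 1)) => orderedPoints x i :=
  (continuous_partialSum _).comp continuous_subtype_val

theorem partialSum_stdSimplex_last (x : stdSimplex ℝ (Fin (n + 1))) :
    Fin.partialSum x (Fin.last (n + 1)) = 1 :=
  (partialSum_last _).trans x.2.2

theorem monotone_orderedPoints (x : stdSimplex ℝ (Fin (n + 1))) : Monotone (orderedPoints x) :=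
  fun _ _ hij =>
    monotone_partialSum x.2.1 (Fin.succ_le_succ_iff.2 (Fin.castSucc_le_castSucc_iff.2 hij))

theorem orderedPoints_zero (x : stdSimplex ℝ (Fin (n + 2))) : orderedPoints x 0 = x 0 :=
  (Fin.partialSum_succ x 0).trans (by rw [Fin.castSucc_zero, Fin.partialSum_zero, zero_add])

theorem orderedPoints_last (x : stdSimplex ℝ (Fin (n + 2))) :
    orderedPoints x (Fin.last n) = 1 - x (Fin.last (n + 1)) := by
  have h := Fin.partialSum_succ x (Fin.last (n + 1))
  rw [Fin.succ_last, partialSum_stdSimplex_last] at h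
  rw [h, add_sub_cancel_right, orderedPoints, Fin.succ_castSucc, Fin.succ_last]

theorem orderedPoints_mem_Icc (x : stdSimplex ℝ (Fin (n + 1))) (i : Fin n) :
    orderedPoints x i ∈ Icc (x 0) (1 - x (Fin.last n)) := by
  obtain _ | n := n
  · exact i.elim0
  · rw [← orderedPoints_zero, ← orderedPoints_last]
    exact ⟨monotone_orderedPoints x (Fin.zero_le i), monotone_orderedPoints x (Fin.le_last i)⟩

theorem orderedPoints_injective :
    Function.Injective (orderedPoints : stdSimplex ℝ (Fin (n + 1)) → Fin n → ℝ) := by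
  intro x x' h
  have hsum : Fin.partialSum x = Fin.partialSum x' := by
    funext k
    cases k using Fin.cases with
    | zero => simp only [Fin.partialSum_zero]
    | succ k =>
      cases k using Fin.lastCases with
      | last => exact (partialSum_stdSimplex_last x).trans (partialSum_stdSimplex_last x').symm
      | cast k => exact congrFun h k
  ext i
  rw [← Fin.partialSum_right_neg x, hsum, Fin.partialSum_right_neg]

theorem monotone_cons_snoc {t : Fin n → ℝ} (ht : Monotone t) (h₀ : ∀ i, 0 ≤ t i)
    (h₁ : ∀ i, t i ≤ 1) :
    Monotone (Fin.cons 0 (Fin.snoc t 1 : Fin (n + 1) → ℝ) : Fin (n + 2) → ℝ) := by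
  refine Fin.monotone_iff_le_succ.2 fun i => ?_
  cases i using Fin.cases with
  | zero =>
    rw [Fin.castSucc_zero, Fin.cons_zero, Fin.cons_succ]
    cases (0 : Fin (n + 1)) using Fin.lastCases with
    | last => simp only [Fin.snoc_last, zero_le_one]
    | cast i => simpa only [Fin.snoc_castSucc] using h₀ i
  | succ i =>
    rw [← Fin.succ_castSucc, Fin.cons_succ, Fin.cons_succ, Fin.snoc_castSucc]
    cases h : i.succ using Fin.lastCases with
    | last => simpa only [Fin.snoc_last] using h₁ i
    | cast j =>
      have hij : (i : ℕ) + 1 = j := congrArg Fin.val h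
      rw [Fin.snoc_castSucc]
      exact ht (Fin.le_def.2 ((Nat.le_succ _).trans_eq hij))

theorem exists_orderedPoints_eq {t : Fin n → ℝ} (ht : Monotone t) (h₀ : ∀ i, 0 ≤ t i)
    (h₁ : ∀ i, t i ≤ 1) : ∃ x, orderedPoints x = t := by
  obtain ⟨g, hg, hgT⟩ := exists_partialSum_eq (monotone_cons_snoc ht h₀ h₁) (Fin.cons_zero _ _)
  refine ⟨⟨g, hg, ?_⟩, funext fun i => ?_⟩
  · rw [← partialSum_last, hgT, ← Fin.succ_last, Fin.cons_succ, Fin.snoc_last]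
  · exact (congrFun hgT _).trans (by rw [Fin.cons_succ, Fin.snoc_castSucc])

theorem mem_realization_gapComplex_iff (ha : 1 ≤ a) {x : stdSimplex ℝ (Fin (n + 1))} :
    x ∈ realization (gapComplex a n) ↔ HasFold a (orderedPoints x) := by
  rw [hasFold_iff_of_monotone ha (monotone_orderedPoints x)]
  constructor
  · rintro ⟨w, hw, hwn, h⟩
    have hle : w - 1 ≤ w + a - 2 := by lia
    refine ⟨⟨w - 1, by lia⟩, ⟨w + a - 2, by lia⟩, by dsimp only; lia, ?_⟩
    refine (partialSum_eq_partialSum_iff x.2.1 ?_).2 fun k hpk hkq => ?_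
    · exact Fin.le_def.2 (Nat.succ_le_succ hle)
    · by_contra hk
      have := h k ⟨k, hk, rfl⟩
      simp only [Fin.le_def, Fin.val_succ, Fin.val_castSucc] at hpk hkq
      lia
  · rintro ⟨i, j, hij, h⟩
    have hle : i.castSucc.succ ≤ j.castSucc.succ := Nat.succ_le_succ (show (i : ℕ) ≤ j by lia)
    refine ⟨i + 1, Nat.le_add_left 1 i, by lia, ?_⟩
    rintro _ ⟨k, hk, rfl⟩ hik
    by_contra hkj
    refine hk ((partialSum_eq_partialSum_iff x.2.1 hle).1 h k hik ?_)
    simp only [Fin.le_def, Fin.val_succ, Fin.val_castSucc]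
    lia

end OrderedPoints

section CirclePoints

theorem coe_addCircle_eq_zero_iff_of_mem_Icc {t : ℝ} (ht : t ∈ Icc (0 : ℝ) 1) :
    (t : UnitAddCircle) = 0 ↔ t = 0 ∨ t = 1 := by
  rcases ht.2.eq_or_lt with rfl | hlt
  · simp only [AddCircle.coe_period, or_true]
  · rw [AddCircle.coe_eq_zero_iff_of_mem_Ico ⟨ht.1, hlt⟩, or_iff_left hlt.ne]

variable {X : Type} [TopologicalSpace X] {n : ℕ}

/-- The images on a circle of the ordered points with gaps `x`, the basepoint being `e 0`. -/
def circlePoints (e : UnitAddCircle ≃ₜ X) (x : stdSimplex ℝ (Fin (n + 1))) (i : Fin n) : X :=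
  e (orderedPoints x i : ℝ)

variable (e : UnitAddCircle ≃ₜ X)

theorem continuous_circlePoints :
    Continuous (circlePoints e : stdSimplex ℝ (Fin (n + 1)) → Fin n → X) :=
  continuous_pi fun i => e.continuous.comp
    ((AddCircle.continuous_mk' 1).comp (continuous_orderedPoints i))

theorem orderedPoints_mem_unitInterval (x : stdSimplex ℝ (Fin (n + 1))) (i : Fin n) :
    orderedPoints x i ∈ Icc (0 : ℝ) 1 :=
  Icc_subset_Icc (x.2.1 0) (sub_le_self 1 (x.2.1 (Fin.last n))) (orderedPoints_mem_Icc x i)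

theorem mem_range_circlePoints_iff (hn : 0 < n) {x : stdSimplex ℝ (Fin (n + 1))} :
    e 0 ∈ range (circlePoints e x) ↔ x 0 = 0 ∨ x (Fin.last n) = 0 := by
  simp only [mem_range, circlePoints, e.injective.eq_iff,
    coe_addCircle_eq_zero_iff_of_mem_Icc (orderedPoints_mem_unitInterval x _)]
  have hmem := orderedPoints_mem_Icc x
  have hx := x.2.1
  constructor
  · rintro ⟨i, hi | hi⟩
    · exact Or.inl (le_antisymm ((hmem i).1.trans_eq hi) (hx 0))
    · exact Or.inr (le_antisymm (by linarith [(hmem i).2]) (hx _))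
  · obtain ⟨k, rfl⟩ := Nat.exists_eq_succ_of_ne_zero hn.ne'
    rintro (h | h)
    · exact ⟨0, Or.inl ((orderedPoints_zero x).trans h)⟩
    · exact ⟨Fin.last k, Or.inr ((orderedPoints_last x).trans (by rw [h, sub_zero]))⟩

theorem eq_of_circlePoints_comp_eq {x x' : stdSimplex ℝ (Fin (n + 1))} {σ : Equiv.Perm (Fin n)}
    (hx : e 0 ∉ range (circlePoints e x)) (h : circlePoints e x ∘ σ = circlePoints e x') :
    x = x' := by
  have mem_Ico {z : stdSimplex ℝ (Fin (n + 1))} (hz : e 0 ∉ range (circlePoints e z)) (i : Fin n) :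
      orderedPoints z i ∈ Ico (0 : ℝ) (0 + 1) := by
    refine ⟨(orderedPoints_mem_unitInterval z i).1, ?_⟩
    rw [zero_add]
    refine (orderedPoints_mem_unitInterval z i).2.lt_of_ne fun h => hz ⟨i, ?_⟩
    rw [circlePoints, h, AddCircle.coe_period]
  have hx' : e 0 ∉ range (circlePoints e x') := by
    rwa [← h, σ.surjective.range_comp]
  have hpts : orderedPoints x ∘ σ = orderedPoints x' := funext fun i =>
    (AddCircle.coe_eq_coe_iff_of_mem_Ico (mem_Ico hx _) (mem_Ico hx' i)).1
      (e.injective (congrFun h i))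
  refine orderedPoints_injective (Eq.trans ?_ hpts)
  exact Tuple.unique_monotone (f := orderedPoints x) (σ := 1) (monotone_orderedPoints x)
    (hpts ▸ monotone_orderedPoints x')

theorem symProj_circlePoints_eq_iff {x x' : stdSimplex ℝ (Fin (n + 1))} :
    symProj n X (e 0) (circlePoints e x) = symProj n X (e 0) (circlePoints e x') ↔
      x = x' ∨ e 0 ∈ range (circlePoints e x) ∧ e 0 ∈ range (circlePoints e x') := by
  rw [symProj_eq_iff]
  constructor
  · rintro (⟨σ, hσ⟩ | h)
    · by_cases hx : e 0 ∈ range (circlePoints e x)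
      · exact Or.inr ⟨hx, by rwa [← hσ, σ.surjective.range_comp]⟩
      · exact Or.inl (eq_of_circlePoints_comp_eq e hx hσ)
    · exact Or.inr h
  · exact Or.imp_left fun h => ⟨1, congrArg (circlePoints e) h⟩

theorem hasFold_circlePoints {a : ℕ} (ha : 1 ≤ a) {x : stdSimplex ℝ (Fin (n + 1))}
    (hx : x ∈ realization (gapComplex a n)) : HasFold a (circlePoints e x) :=
  ((mem_realization_gapComplex_iff ha).1 hx).comp fun t : ℝ => e t

theorem exists_circlePoints_comp_eq {a : ℕ} (ha : 1 ≤ a) {y : Fin n → X} (hy : HasFold a y) :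
    ∃ x ∈ realization (gapComplex a n), ∃ σ : Equiv.Perm (Fin n), circlePoints e x ∘ σ = y := by
  let t : Fin n → ℝ := fun i => AddCircle.equivIco 1 0 (e.symm (y i))
  have ht (i : Fin n) : t i ∈ Ico (0 : ℝ) (0 + 1) := (AddCircle.equivIco 1 0 _).2
  have hfold : HasFold a (t ∘ Tuple.sort t) :=
    (hy.comp fun z => (AddCircle.equivIco (1 : ℝ) 0 (e.symm z) : ℝ)).comp_equiv _
  obtain ⟨x, hx⟩ := exists_orderedPoints_eq (Tuple.monotone_sort t) (fun i => (ht _).1)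
    fun i => (ht _).2.le.trans_eq (zero_add 1)
  refine ⟨x, (mem_realization_gapComplex_iff ha).2 (hx ▸ hfold), (Tuple.sort t).symm, ?_⟩
  funext i
  simp only [Function.comp_apply, circlePoints, hx, Equiv.apply_symm_apply, t,
    AddCircle.coe_equivIco, e.apply_symm_apply]

theorem exists_isCollapse_stratum {a l : ℕ} (ha : 1 ≤ a) :
    ∃ π : realization (gapComplex a (a + l)) →
        stratum (a + l) (1 + l) (fun i => if (i : ℕ) < 1 then a else 1) X (e 0),
      IsCollapse π (subrealization _ (missing 0 (Fin.last _))) := by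
  have : T2Space X := e.t2Space
  let P : realization (gapComplex a (a + l)) → SymSmash (a + l) X (e 0) := fun x =>
    symProj _ _ _ (circlePoints e x)
  have hPcont : Continuous P := (isQuotientMap_symProj _ _ _).continuous.comp
    ((continuous_circlePoints e).comp continuous_subtype_val)
  have hPmem (x) : P x ∈ stratum (a + l) (1 + l) (fun i => if (i : ℕ) < 1 then a else 1) X (e 0) :=
    ⟨_, rfl, exists_eq_bind_replicate_iff_hasFold.2 (hasFold_circlePoints e ha x.2)⟩
  have hPclosed : IsClosedMap P := isClosedMap_symProj.comp
    ((continuous_circlePoints e).comp continuous_subtype_val).isClosedMap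
  refine ⟨codRestrict P _ hPmem, ?_, fun {x x'} => ?_⟩
  · refine (hPclosed.codRestrict hPmem).isQuotientMap (hPcont.codRestrict hPmem) ?_
    rintro ⟨_, y, rfl, hy⟩
    obtain ⟨x, hx, σ, hσ⟩ :=
      exists_circlePoints_comp_eq e ha (exists_eq_bind_replicate_iff_hasFold.1 hy)
    exact ⟨⟨x, hx⟩, Subtype.ext (symProj_eq_iff.2 (Or.inl ⟨σ, hσ⟩))⟩
  · have hn : 0 < a + l := by lia
    rw [mem_subrealization_missing, mem_subrealization_missing,
      ← mem_range_circlePoints_iff e hn, ← mem_range_circlePoints_iff e hn]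
    exact Subtype.ext_iff.trans
      ((symProj_circlePoints_eq_iff e).trans (or_congr_left Subtype.ext_iff.symm))

theorem exists_homeomorph_apply_zero_eq (star : Circle1) :
    ∃ e : UnitAddCircle ≃ₜ Circle1, e 0 = star := by
  let L := Complex.orthonormalBasisOneI.repr
  let e : Circle ≃ₜ Circle1 :=
    { toFun := fun z => ⟨L z, by simp [Circle.norm_coe]⟩
      invFun := fun x => ⟨L.symm x, mem_sphere_zero_iff_norm.2 (by simp)⟩
      left_inv := fun z => by ext; simp
      right_inv := fun x => by ext; simp
      continuous_toFun := by fun_prop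
      continuous_invFun := by fun_prop }
  refine ⟨(AddCircle.homeomorphCircle one_ne_zero).trans
    ((Homeomorph.mulLeft (e.symm star)).trans e), ?_⟩
  simp only [Homeomorph.trans_apply, AddCircle.homeomorphCircle_apply, AddCircle.toCircle_zero,
    Homeomorph.coe_mulLeft, mul_one, e.apply_symm_apply]

end CirclePoints

/-- for `l = a·m + ε` with `ε ∈ {0,1}`, the closed stratum
`Σ_{(a,1^l)}` of `(S^1)^{(a+l)}` is homotopy equivalent to the sphere `S^{2m+ε+1}`. -/
theorem stratum_a_ones_sphere (a l m ε : ℕ)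
    (ha : 2 ≤ a) (hl : 1 ≤ l) (hlme : l = a * m + ε) (hε : ε = 0 ∨ ε = 1)
    (star : Circle1) :
    Nonempty
      (ContinuousMap.HomotopyEquiv
        ↥(stratum (a + l) (1 + l)
          (fun i => if (i : ℕ) < 1 then a else 1) Circle1 star)
        ↥(Metric.sphere (0 : EuclideanSpace ℝ (Fin (2 * m + ε + 2))) 1)) := by
  obtain ⟨e, rfl⟩ := exists_homeomorph_apply_zero_eq star
  obtain ⟨π, hπ⟩ := exists_isCollapse_stratum (l := l) e (one_le_two.trans ha)
  exact nonempty_homotopyEquiv_sphere ha (by lia) (by rw [hlme]; ring) hπ
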